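/- arXiv:1211.2558 — 2 statements merged into one kernel-verified Lean document; each statement's English description precedes it below -/
import Mathlib

section
/- Every 1-extendable graph with more than two vertices is 2-connected. Here a graph G is 1-extendable if it is connected, has at least one edge, and every edge of G lies in some perfect matching of G. -/
/-!
For a perfect matching `M` and a vertex `v`, the graph `G - v` has an odd number of vertices, hence
an odd component. An odd component must be left by an edge of `M`, which can only lead to `v`; so
there is exactly one odd component, namely the one containing the partner of `v`. Since `G` is
connected, every component of `G - v` contains a neighbour of `v`. If every edge at `v` lies in a
perfect matching, then every component is odd, and so there is only one component.
-/

open SimpleGraph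

section

variable {V : Type*} [Finite V] {G : SimpleGraph V} {M : G.Subgraph}

theorem exists_mem_oddComponents_compl (hM : M.IsPerfectMatching) {K : Set V} (hK : Odd K.ncard) :
    ∃ C : G.ComponentCompl K, C ∈ (G.induce Kᶜ).oddComponents := by
  cases nonempty_fintype V
  have hV : Even (K.ncard + Kᶜ.ncard) := by
    rw [Set.ncard_add_ncard_compl, Nat.card_eq_fintype_card]
    exact hM.even_card
  have hKc : Odd (Nat.card ↥Kᶜ) := (Nat.even_add'.mp hV).mp hK
  exact Set.nonempty_of_ncard_ne_zero ((odd_ncard_oddComponents _).mpr hKc).pos.ne'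

theorem exists_adj_of_mem_oddComponents_compl (hM : M.IsPerfectMatching) {K : Set V}
    {C : G.ComponentCompl K} (hC : C ∈ (G.induce Kᶜ).oddComponents) :
    ∃ w ∈ K, ∃ x ∈ C, M.Adj w x := by
  -- Mathlib phrases this for the coercion of the subgraph `deleteVerts ⊤ K`.
  suffices h : ∀ c ∈ (G.induce Kᶜ).oddComponents, ∃ w ∈ K, ∃ x ∈ c.supp, M.Adj w x by
    obtain ⟨w, hw, x, hx, hwx⟩ := h C hC
    exact ⟨w, hw, x, ⟨x.2, hx⟩, hwx⟩
  rw [Set.compl_eq_univ_sdiff, induce_eq_coe_induce_top]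
  intro c hc
  obtain ⟨w, hw, x, hxw, hx⟩ := ConnectedComponent.odd_matches_node_outside hM ⟨c, hc⟩
  exact ⟨w, hw, x, hx, hxw.symm⟩

theorem mem_oddComponents_compl_singleton_iff_of_adj (hM : M.IsPerfectMatching) {v w : V}
    (hvw : M.Adj v w) {C : G.ComponentCompl {v}} :
    C ∈ (G.induce {v}ᶜ).oddComponents ↔ w ∈ C := by
  have partner_mem {D : G.ComponentCompl {v}} (hD : D ∈ (G.induce {v}ᶜ).oddComponents) :
      w ∈ D := by
    obtain ⟨_, rfl, x, hx, hvx⟩ := exists_adj_of_mem_oddComponents_compl hM hD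
    exact hM.1.eq_of_adj_left hvx hvw ▸ hx
  refine ⟨partner_mem, fun hw => ?_⟩
  obtain ⟨D, hD⟩ := exists_mem_oddComponents_compl hM (K := {v}) (by simp)
  obtain ⟨_, rfl⟩ := hw
  obtain ⟨_, rfl⟩ := partner_mem hD
  exact hD

theorem preconnected_induce_compl_singleton_of_isPerfectMatching (hG : G.Preconnected)
    {v : V} (hv : ∀ w, G.Adj v w → ∃ M : G.Subgraph, M.IsPerfectMatching ∧ M.Adj v w) :
    (G.induce {v}ᶜ).Preconnected := by
  have exists_matching (C : G.ComponentCompl {v}) :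
      ∃ w ∈ C, ∃ M : G.Subgraph, M.IsPerfectMatching ∧ M.Adj v w := by
    obtain ⟨⟨w, _⟩, hw, rfl, hwv⟩ := C.exists_adj_boundary_pair hG (Set.singleton_nonempty v)
    exact ⟨w, hw, hv w hwv.symm⟩
  have all_odd (C : G.ComponentCompl {v}) : C ∈ (G.induce {v}ᶜ).oddComponents := by
    obtain ⟨w, hw, M, hM, hvw⟩ := exists_matching C
    exact (mem_oddComponents_compl_singleton_iff_of_adj hM hvw).mpr hw
  intro x y
  obtain ⟨w, ⟨_, hwx⟩, M, hM, hvw⟩ := exists_matching (G.componentComplMk x.2)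
  obtain ⟨_, hwy⟩ := (mem_oddComponents_compl_singleton_iff_of_adj hM hvw).mp
    (all_odd (G.componentComplMk y.2))
  exact ConnectedComponent.exact (hwx.symm.trans hwy)

end

/-- Every 1-extendable graph (connected, with an edge, in which every edge lies in some
perfect matching) on more than two vertices is 2-connected: it is connected and remains
connected after deleting any single vertex. -/
theorem one_extendable_two_connected {V : Type*} [Fintype V] (G : SimpleGraph V)
    (hconn : G.Connected)
    (hedge : ∃ e, e ∈ G.edgeSet)
    (hext : ∀ e ∈ G.edgeSet, ∃ M : G.Subgraph, M.IsPerfectMatching ∧ e ∈ M.edgeSet)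
    (hcard : 2 < Fintype.card V) :
    G.Connected ∧ ∀ v : V, (G.induce {u : V | u ≠ v}).Connected := by
  refine ⟨hconn, fun v => ?_⟩
  have : Nontrivial V := Fintype.one_lt_card_iff_nontrivial.mp (by lia)
  obtain ⟨w, hw⟩ := exists_ne v
  have hpre : (G.induce {v}ᶜ).Preconnected :=
    preconnected_induce_compl_singleton_of_isPerfectMatching hconn.preconnected
      fun w hvw => hext s(v, w) hvw
  exact (connected_iff _).mpr ⟨hpre, ⟨⟨w, hw⟩⟩⟩
end

section
/- Let G be a finite connected graph and let A, B be sets of vertices. Then the minimum cardinality of a vertex set separating A from B equals the maximum number of pairwise disjoint A–B paths in G (Menger's theorem, vertex version). -/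
/-!
Call a graph Mengerian if it has `k` disjoint `A`–`B` paths whenever every finite `A`–`B` separator
has at least `k` vertices, for all `A`, `B` and `k`. Following Göring, this property survives the
addition of an edge `xy` to `G`. The only case to consider is that `G` has an `A`–`B` separator `S`
with fewer than `k` vertices which does not separate `A` from `B` in `G + xy`; then, up to swapping
`x` and `y`, the graph `G - S` joins `A` to `x` and `y` to `B`. Any set separating `A` from
`S ∪ {x}` in `G` separates `A` from `B` in `G + xy`, so `G` contains `k` disjoint paths from `A`
onto `S ∪ {x}`, and likewise `k` disjoint paths from `B` onto `S ∪ {y}`. The two families meet only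
in `S`, and they are joined along `S` and the edge `xy`.

In an infinite graph without separators of at most `k` vertices, let `k` disjoint `A`–`B` paths be
given. A set of at most `k` vertices which meets all of them consists of one vertex of each path, so
there are finitely many such sets. The paths together with one `A`–`B` walk avoiding each of these
sets form a finite subgraph in which `A` and `B` still cannot be separated by `k` vertices, and this
subgraph has `k + 1` disjoint paths.
-/

namespace Menger

open SimpleGraph

variable {V ι : Type*} {G H : SimpleGraph V} {A B P Q S X : Set V} {a b c x y v : V}

/-- `b` can be reached from `a` in `G - S`, phrased through walks of `G` so that no subtype of
vertices is needed. -/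
def ReachableAvoiding (G : SimpleGraph V) (S : Set V) (a b : V) : Prop :=
  ∃ p : G.Walk a b, ∀ v ∈ p.support, v ∉ S

namespace ReachableAvoiding

theorem refl (ha : a ∉ S) : ReachableAvoiding G S a a :=
  ⟨.nil, by simpa using ha⟩

theorem symm (h : ReachableAvoiding G S a b) : ReachableAvoiding G S b a := by
  obtain ⟨p, hp⟩ := h
  exact ⟨p.reverse, by simpa using hp⟩

theorem trans (hab : ReachableAvoiding G S a b) (hbc : ReachableAvoiding G S b c) :
    ReachableAvoiding G S a c := by
  obtain ⟨p, hp⟩ := hab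
  obtain ⟨q, hq⟩ := hbc
  exact ⟨p.append q, fun v hv => ((Walk.mem_support_append_iff _ _).1 hv).elim (hp v) (hq v)⟩

theorem cons (hac : G.Adj a c) (ha : a ∉ S) (hcb : ReachableAvoiding G S c b) :
    ReachableAvoiding G S a b := by
  obtain ⟨p, hp⟩ := hcb
  exact ⟨.cons hac p, by simpa [ha] using hp⟩

theorem avoids_or_reaches (S : Set V) (h : ReachableAvoiding G X a b) :
    ReachableAvoiding G S a b ∨ ∃ s ∈ S, ReachableAvoiding G X a s := by
  classical
  obtain ⟨p, hp⟩ := h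
  by_cases hpS : ∀ v ∈ p.support, v ∉ S
  · exact .inl ⟨p, hpS⟩
  · push Not at hpS
    obtain ⟨s, hsp, hsS⟩ := hpS
    exact .inr ⟨s, hsS, p.takeUntil s hsp, fun v hv =>
      hp v (p.support_takeUntil_subset_support hsp hv)⟩

theorem of_sup_edge (h : ReachableAvoiding (G ⊔ edge x y) S a b) :
    ReachableAvoiding G S a b ∨ ReachableAvoiding G S a x ∨ ReachableAvoiding G S a y := by
  obtain ⟨p, hp⟩ := h
  induction p with
  | nil => exact .inl (refl (hp _ (by simp)))
  | cons hadj p ih =>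
    simp only [Walk.support_cons, List.mem_cons, forall_eq_or_imp] at hp
    rcases hadj with hG | hedge
    · exact (ih hp.2).imp (cons hG hp.1) (Or.imp (cons hG hp.1) (cons hG hp.1))
    · rcases ((edge_adj ..).1 hedge).1 with ⟨rfl, -⟩ | ⟨rfl, -⟩
      · exact .inr (.inl (refl hp.1))
      · exact .inr (.inr (refl hp.1))

end ReachableAvoiding

/-- `X` separates `A` from `B` in `G`. -/
def Separates (G : SimpleGraph V) (A B X : Set V) : Prop :=
  ∀ a ∈ A, ∀ b ∈ B, ∀ p : G.Walk a b, ∃ x ∈ X, x ∈ p.support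

theorem separates_iff_forall_not_reachableAvoiding :
    Separates G A B X ↔ ∀ a ∈ A, ∀ b ∈ B, ¬ ReachableAvoiding G X a b := by
  refine forall₄_congr fun a _ b _ => ?_
  rw [ReachableAvoiding, not_exists]
  refine forall_congr' fun p => ?_
  push Not
  exact exists_congr fun v => and_comm

theorem exists_reachableAvoiding_of_not_separates (h : ¬ Separates G A B X) :
    ∃ a ∈ A, ∃ b ∈ B, ReachableAvoiding G X a b := by
  contrapose! h
  exact separates_iff_forall_not_reachableAvoiding.2 h

namespace Separates

theorem not_reachableAvoiding (h : Separates G A B X) (ha : a ∈ A) (hb : b ∈ B) :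
    ¬ ReachableAvoiding G X a b :=
  separates_iff_forall_not_reachableAvoiding.1 h a ha b hb

theorem symm (h : Separates G A B X) : Separates G B A X :=
  separates_iff_forall_not_reachableAvoiding.2 fun _b hb _a ha hba =>
    h.not_reachableAvoiding ha hb hba.symm

theorem of_subset (h : B ⊆ X) : Separates G A B X :=
  fun _a _ha b hb p => ⟨b, h hb, p.end_mem_support⟩

theorem sup_edge (hS : Separates G A B S) (hb : b ∈ B) (hyb : ReachableAvoiding G S y b)
    (hX : Separates G A (insert x S) X) : Separates (G ⊔ edge x y) A B X := by
  refine separates_iff_forall_not_reachableAvoiding.2 fun a ha b' hb' hab' => ?_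
  have avoids {z : V} (haz : ReachableAvoiding G X a z) : ReachableAvoiding G S a z :=
    (haz.avoids_or_reaches S).resolve_right fun ⟨_s, hs, has⟩ =>
      hX.not_reachableAvoiding ha (.inr hs) has
  rcases hab'.of_sup_edge with hab' | hax | hay
  · exact hS.not_reachableAvoiding ha hb' (avoids hab')
  · exact hX.not_reachableAvoiding ha (.inl rfl) hax
  · exact hS.not_reachableAvoiding ha hb ((avoids hay).trans hyb)

theorem reachableAvoiding_of_sup_edge (hS : Separates G A B S) (ha : a ∈ A) (hb : b ∈ B)
    (h : ReachableAvoiding (G ⊔ edge x y) S a b) :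
    (ReachableAvoiding G S a x ∧ ReachableAvoiding G S y b) ∨
      (ReachableAvoiding G S a y ∧ ReachableAvoiding G S x b) := by
  have hab := hS.not_reachableAvoiding ha hb
  rcases h.of_sup_edge.resolve_left hab with hax | hay <;>
    rcases h.symm.of_sup_edge.resolve_left fun hba => hab hba.symm with hbx | hby
  · exact absurd (hax.trans hbx.symm) hab
  · exact .inl ⟨hax, hby.symm⟩
  · exact .inr ⟨hay, hbx.symm⟩
  · exact absurd (hay.trans hby.symm) hab

end Separates

/-- The family `f` consists of pairwise disjoint `A`–`B` paths of `G`. -/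
def IsLinkage (G : SimpleGraph V) (A B : Set V) (f : ι → Σ a : V, Σ b : V, G.Walk a b) : Prop :=
  (∀ i, (f i).1 ∈ A ∧ (f i).2.1 ∈ B ∧ (f i).2.2.IsPath) ∧
    ∀ i j, i ≠ j → ∀ v : V, v ∈ (f i).2.2.support → v ∉ (f j).2.2.support

/-- `G` contains `k` pairwise disjoint `A`–`B` paths. -/
def Linked (G : SimpleGraph V) (A B : Set V) (k : ℕ) : Prop :=
  ∃ f : Fin k → Σ a : V, Σ b : V, G.Walk a b, IsLinkage G A B f

theorem exists_isLinkage_of_pairwise_disjoint {U : ι → Set V}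
    (hU : ∀ i j, i ≠ j → Disjoint (U i) (U j))
    (hwalk : ∀ i, ∃ a ∈ A, ∃ b ∈ B, ∃ p : G.Walk a b, ∀ v ∈ p.support, v ∈ U i) :
    ∃ f : ι → Σ a : V, Σ b : V, G.Walk a b, IsLinkage G A B f := by
  classical
  choose a ha b hb p hp using hwalk
  refine ⟨fun i => ⟨a i, b i, (p i).bypass⟩, fun i => ⟨ha i, hb i, (p i).bypass_isPath⟩, ?_⟩
  intro i j hij v hi hj
  exact Set.disjoint_left.1 (hU i j hij) (hp i v ((p i).support_bypass_subset_support hi))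
    (hp j v ((p j).support_bypass_subset_support hj))

namespace IsLinkage

variable {f : ι → Σ a : V, Σ b : V, G.Walk a b}

theorem comp_injective {κ : Type*} {e : κ → ι} (hf : IsLinkage G A B f)
    (he : Function.Injective e) : IsLinkage G A B (f ∘ e) :=
  ⟨fun i => hf.1 (e i), fun _i _j hij => hf.2 _ _ (he.ne hij)⟩

theorem linked [Finite ι] (hf : IsLinkage G A B f) : Linked G A B (Nat.card ι) :=
  ⟨_, hf.comp_injective (Finite.equivFin ι).symm.injective⟩

theorem injective_of_mem_support {c : ι → V} (hf : IsLinkage G A B f)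
    (hc : ∀ i, c i ∈ (f i).2.2.support) : Function.Injective c := by
  intro i j hij
  by_contra hne
  exact hf.2 i j hne (c i) (hc i) (hij ▸ hc j)

theorem eq_of_mem_support_of_end_eq {t : ι → V} {i j : ι} (hf : IsLinkage G A B f)
    (ht : ∀ i, (f i).2.1 = t i) (hj : t j ∈ (f i).2.2.support) : i = j := by
  by_contra hij
  exact hf.2 i j hij (t j) hj (ht j ▸ (f j).2.2.end_mem_support)

theorem exists_reachableAvoiding_of_mem_support {t : ι → V} {i : ι} (hf : IsLinkage G A B f)
    (ht : ∀ i, (f i).2.1 = t i) (hS : S ⊆ Set.range t) (hv : v ∈ (f i).2.2.support) (hvS : v ∉ S) :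
    ∃ a ∈ A, ReachableAvoiding G S a v := by
  classical
  refine ⟨(f i).1, (hf.1 i).1, (f i).2.2.takeUntil v hv, fun s hs hsS => ?_⟩
  obtain ⟨j, rfl⟩ := hS hsS
  obtain rfl := hf.eq_of_mem_support_of_end_eq ht
    ((f i).2.2.support_takeUntil_subset_support hv hs)
  rw [← ht i] at hs hsS
  exact Walk.endpoint_notMem_support_takeUntil (hf.1 i).2.2 hv (fun h => hvS (h ▸ hsS)) hs

theorem exists_concat {f g : ι → Σ a : V, Σ b : V, H.Walk a b} (hHG : H ≤ G)
    (hf : IsLinkage H A P f) (hg : IsLinkage H B Q g)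
    (hjoin : ∀ i, (f i).2.1 = (g i).2.1 ∨ G.Adj (f i).2.1 (g i).2.1)
    (hcross : ∀ i j, ∀ v ∈ (f i).2.2.support, v ∈ (g j).2.2.support → i = j) :
    ∃ h : ι → Σ a : V, Σ b : V, G.Walk a b, IsLinkage G A B h := by
  refine exists_isLinkage_of_pairwise_disjoint
    (U := fun i => {v | v ∈ (f i).2.2.support} ∪ {v | v ∈ (g i).2.2.support}) ?_ fun i => ?_
  · intro i j hij
    refine Set.disjoint_left.2 ?_
    rintro v (hvi | hvi) (hvj | hvj)
    · exact hf.2 i j hij v hvi hvj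
    · exact hij (hcross i j v hvi hvj)
    · exact hij (hcross j i v hvj hvi).symm
    · exact hg.2 i j hij v hvi hvj
  · obtain ⟨r, hr⟩ : ∃ r : G.Walk (f i).2.1 (g i).2.1,
        ∀ v ∈ r.support, v = (f i).2.1 ∨ v = (g i).2.1 := by
      rcases hjoin i with heq | hadj
      · exact ⟨Walk.nil.copy rfl heq, by simp⟩
      · exact ⟨hadj.toWalk, by simp⟩
    refine ⟨_, (hf.1 i).1, _, (hg.1 i).1,
      ((f i).2.2.mapLe hHG).append (r.append ((g i).2.2.mapLe hHG).reverse), fun v hv => ?_⟩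
    simp only [Walk.mem_support_append_iff, Walk.support_reverse, List.mem_reverse,
      Walk.support_mapLe_eq_support] at hv
    rcases hv with hv | hv | hv
    · exact .inl hv
    · rcases hr v hv with rfl | rfl
      · exact .inl (f i).2.2.end_mem_support
      · exact .inr (g i).2.2.end_mem_support
    · exact .inr hv

end IsLinkage

namespace Linked

theorem mono {k : ℕ} (hHG : H ≤ G) (h : Linked H A B k) : Linked G A B k := by
  obtain ⟨f, hf⟩ := h
  refine ⟨fun i => ⟨(f i).1, (f i).2.1, (f i).2.2.mapLe hHG⟩, fun i => ?_, fun i j hij v => ?_⟩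
  · simpa using hf.1 i
  · simpa using hf.2 i j hij v

theorem card_le {k : ℕ} {X : Finset V} (h : Linked G A B k) (hX : Separates G A B X) :
    k ≤ X.card := by
  obtain ⟨f, hf⟩ := h
  choose c hcX hc using fun i => hX _ (hf.1 i).1 _ (hf.1 i).2.1 (f i).2.2
  simpa using Finset.card_le_card_of_injOn c (s := Finset.univ) (fun i _ => hcX i)
    (hf.injective_of_mem_support hc).injOn

theorem exists_isLinkage_end_eq [Finite ι] {t : ι → V}
    (h : Linked G A (Set.range t) (Nat.card ι)) :
    ∃ f : ι → Σ a : V, Σ b : V, G.Walk a b, IsLinkage G A (Set.range t) f ∧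
      ∀ i, (f i).2.1 = t i := by
  obtain ⟨f, hf⟩ := h
  choose e he using fun i => (hf.1 i).2.1
  have he_inj : Function.Injective e := .of_comp (f := t) <|
    hf.injective_of_mem_support fun i => by simp [he]
  let σ := Equiv.ofBijective e (he_inj.bijective_of_nat_card_le (by simp))
  exact ⟨f ∘ σ.symm, hf.comp_injective σ.symm.injective, fun i => by
    rw [Function.comp_apply, ← he]
    exact congrArg t (σ.apply_symm_apply i)⟩

/-- Indexing both families of paths by `Option S` matches their ends: `some s` stands for `s` on
both sides, and `none` for `x` on one side and `y` on the other. -/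
theorem sup_edge_of_separates [Finite S] (hS : Separates G A B S)
    (hA : Linked G A (insert x S) (Nat.card (Option S)))
    (hB : Linked G B (insert y S) (Nat.card (Option S))) :
    Linked (G ⊔ edge x y) A B (Nat.card (Option S)) := by
  have range_elim (z : V) : Set.range (fun o : Option S => o.elim z (↑)) = insert z S := by
    rw [Option.range_elim, Subtype.range_coe]
  rw [← range_elim] at hA hB
  obtain ⟨f, hf, hfx⟩ := hA.exists_isLinkage_end_eq
  obtain ⟨g, hg, hgy⟩ := hB.exists_isLinkage_end_eq
  have hjoin (i : Option S) :
      (f i).2.1 = (g i).2.1 ∨ (G ⊔ edge x y).Adj (f i).2.1 (g i).2.1 := by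
    rcases i with _ | s
    · rcases eq_or_ne x y with rfl | hxy
      · simp [hfx, hgy]
      · simp [hfx, hgy, edge_adj, hxy]
    · simp [hfx, hgy]
  have hcross (i j : Option S) (v : V) (hvf : v ∈ (f i).2.2.support)
      (hvg : v ∈ (g j).2.2.support) : i = j := by
    by_cases hvS : v ∈ S
    · exact (hf.eq_of_mem_support_of_end_eq hfx (j := some ⟨v, hvS⟩) hvf).trans
        (hg.eq_of_mem_support_of_end_eq hgy (j := some ⟨v, hvS⟩) hvg).symm
    · obtain ⟨a, ha, hav⟩ :=
        hf.exists_reachableAvoiding_of_mem_support hfx (by simp [range_elim]) hvf hvS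
      obtain ⟨b, hb, hbv⟩ :=
        hg.exists_reachableAvoiding_of_mem_support hgy (by simp [range_elim]) hvg hvS
      exact absurd (hav.trans hbv.symm) (hS.not_reachableAvoiding ha hb)
  obtain ⟨h, hh⟩ := hf.exists_concat le_sup_left hg hjoin hcross
  exact hh.linked

end Linked

/-- The nontrivial inequality of Menger's theorem holds in `G`, for all pairs of vertex sets. -/
def IsMengerian (G : SimpleGraph V) : Prop :=
  ∀ (A B : Set V) (k : ℕ), (∀ X : Finset V, Separates G A B X → k ≤ X.card) → Linked G A B k

theorem isMengerian_bot : IsMengerian (⊥ : SimpleGraph V) := by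
  intro A B k hk
  obtain ⟨T, hTAB, rfl⟩ : ∃ T : Finset V, (T : Set V) ⊆ A ∩ B ∧ T.card = k := by
    rcases (A ∩ B).finite_or_infinite with hfin | hinf
    · have hsep : Separates ⊥ A B hfin.toFinset := by
        rintro a ha b hb (_ | hadj)
        · exact ⟨a, by simp [ha, hb], by simp⟩
        · exact hadj.elim
      obtain ⟨T, hT, hTk⟩ := Finset.exists_subset_card_eq (hk _ hsep)
      exact ⟨T, by simpa using hT, hTk⟩
    · exact hinf.exists_subset_card_eq k
  rw [← Nat.card_eq_finsetCard]
  obtain ⟨f, hf⟩ := exists_isLinkage_of_pairwise_disjoint (G := ⊥) (U := fun v : T => {v.1})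
    (fun v w hvw => Set.disjoint_singleton.2 (Subtype.coe_injective.ne hvw))
    fun v => ⟨v, (hTAB v.2).1, v, (hTAB v.2).2, .nil, by simp⟩
  exact hf.linked

namespace IsMengerian

theorem linked_sup_edge {S : Finset V} {k : ℕ} (hG : IsMengerian G)
    (hk : ∀ X : Finset V, Separates (G ⊔ edge x y) A B X → k ≤ X.card)
    (hS : Separates G A B S) (hSk : S.card < k) (ha : a ∈ A) (hb : b ∈ B)
    (hax : ReachableAvoiding G S a x) (hyb : ReachableAvoiding G S y b) :
    Linked (G ⊔ edge x y) A B k := by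
  classical
  have sep_of_left (X : Set V) (hX : Separates G A (insert x S) X) :
      Separates (G ⊔ edge x y) A B X := hS.sup_edge hb hyb hX
  have sep_of_right (X : Set V) (hX : Separates G B (insert y S) X) :
      Separates (G ⊔ edge x y) A B X :=
    (edge_comm y x ▸ hS.symm.sup_edge ha hax.symm hX).symm
  have hcard : Nat.card (Option (S : Set V)) = k := by
    have hle : k ≤ (insert x S).card := hk _ (sep_of_left _ (.of_subset (by simp)))
    rw [Finite.card_option, Nat.card_coe_set_eq, Set.ncard_coe_finset]
    exact le_antisymm hSk (hle.trans (Finset.card_insert_le x S))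
  subst hcard
  exact .sup_edge_of_separates hS
    (hG _ _ _ fun X hX => hk X (sep_of_left X hX))
    (hG _ _ _ fun X hX => hk X (sep_of_right X hX))

theorem sup_edge (hG : IsMengerian G) (x y : V) : IsMengerian (G ⊔ edge x y) := by
  intro A B k hk
  by_cases hGk : ∀ X : Finset V, Separates G A B X → k ≤ X.card
  · exact (hG A B k hGk).mono le_sup_left
  push Not at hGk
  obtain ⟨S, hS, hSk⟩ := hGk
  have hnotsep : ¬ Separates (G ⊔ edge x y) A B S := fun h => (hk S h).not_gt hSk
  obtain ⟨a, ha, b, hb, hab⟩ := exists_reachableAvoiding_of_not_separates hnotsep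
  rcases hS.reachableAvoiding_of_sup_edge ha hb hab with ⟨hax, hyb⟩ | ⟨hay, hxb⟩
  · exact hG.linked_sup_edge hk hS hSk ha hb hax hyb
  · rw [edge_comm] at hk ⊢
    exact hG.linked_sup_edge hk hS hSk ha hb hay hxb

theorem of_finite_edgeSet (hG : G.edgeSet.Finite) : IsMengerian G := by
  rw [← G.fromEdgeSet_edgeSet]
  generalize G.edgeSet = E at hG
  induction E, hG using Set.Finite.induction_on with
  | empty => simpa using isMengerian_bot
  | @insert e E _ _ ih =>
    obtain ⟨x, y⟩ := e
    rw [Set.insert_eq, Set.union_comm, fromEdgeSet_union]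
    exact ih.sup_edge x y

end IsMengerian

theorem exists_finite_edgeSet_forall_walk [Finite ι] (w : ι → Σ a : V, Σ b : V, G.Walk a b) :
    ∃ H ≤ G, H.edgeSet.Finite ∧
      ∀ i, ∃ p : H.Walk (w i).1 (w i).2.1, p.support = (w i).2.2.support := by
  let E : Set (Sym2 V) := ⋃ i, {e | e ∈ (w i).2.2.edges}
  have hEG : E ⊆ G.edgeSet := Set.iUnion_subset fun i e he => (w i).2.2.edges_subset_edgeSet he
  have hE : (fromEdgeSet E).edgeSet = E := by
    rw [edgeSet_fromEdgeSet, sdiff_eq_left]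
    exact Set.disjoint_left.2 fun e he => G.not_isDiag_of_mem_edgeSet (hEG he)
  refine ⟨fromEdgeSet E, ?_, ?_, fun i => ?_⟩
  · rwa [← edgeSet_subset_edgeSet, hE]
  · rw [hE]
    exact Set.finite_iUnion fun i => List.finite_toSet _
  · have hi : ∀ e ∈ (w i).2.2.edges, e ∈ (fromEdgeSet E).edgeSet := fun e he =>
      hE.ge (Set.mem_iUnion.2 ⟨i, he⟩)
    exact ⟨(w i).2.2.transfer _ hi, Walk.support_transfer _ hi⟩

theorem IsLinkage.exists_finite_edgeSet_forall_lt_card {k : ℕ}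
    {f : Fin k → Σ a : V, Σ b : V, G.Walk a b} (hf : IsLinkage G A B f)
    (hk : ∀ X : Finset V, Separates G A B X → k < X.card) :
    ∃ H ≤ G, H.edgeSet.Finite ∧ ∀ X : Finset V, Separates H A B X → k < X.card := by
  classical
  have exists_avoiding (c : Fin k → V) : ∃ w : Σ a : V, Σ b : V, G.Walk a b,
      w.1 ∈ A ∧ w.2.1 ∈ B ∧ ∀ v ∈ w.2.2.support, v ∉ Finset.univ.image c := by
    have hnotsep : ¬ Separates G A B (Finset.univ.image c : Finset V) := fun h =>
      (hk _ h).not_ge (Finset.card_image_le.trans (by simp))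
    obtain ⟨a, ha, b, hb, p, hp⟩ := exists_reachableAvoiding_of_not_separates hnotsep
    exact ⟨⟨a, b, p⟩, ha, hb, hp⟩
  choose w hwA hwB hw using exists_avoiding
  let transversals := Fintype.piFinset fun i => (f i).2.2.support.toFinset
  obtain ⟨H, hHG, hHfin, hH⟩ :=
    exists_finite_edgeSet_forall_walk (Sum.elim f fun c : transversals => w c)
  refine ⟨H, hHG, hHfin, fun X hX => lt_of_not_ge fun hXk => ?_⟩
  have meets_f (i : Fin k) : ∃ v ∈ X, v ∈ (f i).2.2.support := by
    obtain ⟨p, hp⟩ := hH (.inl i)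
    exact hp ▸ hX _ (hf.1 i).1 _ (hf.1 i).2.1 p
  choose c hcX hc using meets_f
  have himage : Finset.univ.image c = X :=
    Finset.eq_of_subset_of_card_le (by simpa [Finset.subset_iff] using hcX) <| by
      simpa [Finset.card_image_of_injective _ (hf.injective_of_mem_support hc)] using hXk
  obtain ⟨p, hp⟩ := hH (.inr ⟨c, by simpa [transversals] using hc⟩)
  obtain ⟨v, hvX, hvp⟩ := hX _ (hwA c) _ (hwB c) p
  exact hw c v (hp ▸ hvp) (himage ▸ hvX)

theorem isMengerian (G : SimpleGraph V) : IsMengerian G := by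
  intro A B k hk
  induction k with
  | zero => exact ⟨Fin.elim0, fun i => i.elim0, fun i => i.elim0⟩
  | succ k ih =>
    obtain ⟨f, hf⟩ := ih fun X hX => (Nat.le_succ k).trans (hk X hX)
    obtain ⟨H, hHG, hHfin, hH⟩ := hf.exists_finite_edgeSet_forall_lt_card hk
    exact (IsMengerian.of_finite_edgeSet hHfin A B (k + 1) hH).mono hHG

end Menger

open Menger in
theorem menger_vertex_general {V : Type*} (G : SimpleGraph V) (A B : Set V)
    (hsep : ∃ X : Finset V, Separates G A B X) :
    sInf {n : ℕ | ∃ X : Finset V, X.card = n ∧ Separates G A B X} =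
      sSup {n : ℕ | Linked G A B n} := by
  refine (IsGreatest.csSup_eq ⟨?_, fun n hn => ?_⟩).symm
  · exact isMengerian G A B _ fun X hX => Nat.sInf_le ⟨X, rfl, hX⟩
  · obtain ⟨X₀, hX₀⟩ := hsep
    refine le_csInf ⟨_, X₀, rfl, hX₀⟩ ?_
    rintro _ ⟨X, rfl, hX⟩
    exact hn.card_le hX

/-- Menger's theorem (vertex version): in a finite connected graph `G`, for vertex sets
`A` and `B`, the minimum size of a vertex set meeting every `A`–`B` walk equals the
maximum number of pairwise vertex-disjoint `A`–`B` paths. -/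
theorem menger_vertex {V : Type*} [Fintype V] [DecidableEq V]
    (G : SimpleGraph V) (hG : G.Connected) (A B : Set V) :
    sInf {n : ℕ | ∃ X : Finset V, X.card = n ∧
        ∀ a ∈ A, ∀ b ∈ B, ∀ p : G.Walk a b, ∃ x ∈ X, x ∈ p.support}
      = sSup {n : ℕ | ∃ f : Fin n → Σ a : V, Σ b : V, G.Walk a b,
          (∀ i, (f i).1 ∈ A ∧ (f i).2.1 ∈ B ∧ (f i).2.2.IsPath) ∧
          ∀ i j, i ≠ j → ∀ x : V,
            x ∈ (f i).2.2.support → x ∉ (f j).2.2.support} :=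
  menger_vertex_general G A B ⟨Finset.univ, .of_subset (by simp)⟩
end
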